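/- arXiv:1610.02731 — 4 statements merged into one kernel-verified Lean document; each statement's English description precedes it below -/
import Mathlib

section
/- A representation of the algebra F_{d,n} of dimension vector (v,u) is θ⁺-semistable if and only if it is θ⁺-stable. -/
/-- A `(v,u)`-dimensional representation of the algebra `F_{d,n}`: linear maps
`e : ℂ^{v₀} → ℂ^u`, `A p : ℂ^{v_{p+1}} → ℂ^{v_p}` (the paper's `A_{p+1}`, for `p+1 < d`),
`f q : ℂ^u → ℂ^{v₀}` (the paper's `f_{q+1}`, for `q+1 < n`) and
`B p q : ℂ^{v_p} → ℂ^{v_{p+1}}` (the paper's `B_{p+1,q+1}`), satisfying the relations of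
`F_{d,n}`.  Indices outside the relevant ranges are unconstrained junk. -/
structure FRep (d n u : ℕ) (v : ℕ → ℕ) where
  e : (Fin (v 0) → ℂ) →ₗ[ℂ] (Fin u → ℂ)
  A : (p : ℕ) → (Fin (v (p + 1)) → ℂ) →ₗ[ℂ] (Fin (v p) → ℂ)
  f : (q : ℕ) → (Fin u → ℂ) →ₗ[ℂ] (Fin (v 0) → ℂ)
  B : (p q : ℕ) → (Fin (v p) → ℂ) →ₗ[ℂ] (Fin (v (p + 1)) → ℂ)
  rel1 : d = 1 → ∀ q, q + 1 < n → (f q).comp e = 0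
  rel2 : 2 ≤ d → ∀ q, q + 1 < n → (A 0).comp (B 0 q) + (f q).comp e = 0
  rel3 : ∀ p q, p + 2 < d → q + 1 < n →
    (A (p + 1)).comp (B (p + 1) q) = (B p q).comp (A p)
  rel4 : 2 ≤ d → ∀ q, q + 1 < n → (B (d - 2) q).comp (A (d - 2)) = 0

/-- A subrepresentation `(S₀,…,S_{d−1},S_∞)` of a representation of `F_{d,n}`. -/
structure IsSubrep (d n u : ℕ) (v : ℕ → ℕ) (R : FRep d n u v)
    (S : (p : ℕ) → Submodule ℂ (Fin (v p) → ℂ)) (Sinf : Submodule ℂ ℂ) : Prop where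
  hA : ∀ p, p + 1 < d → ∀ x ∈ S (p + 1), R.A p x ∈ S p
  hB : ∀ p q, p + 1 < d → q + 1 < n → ∀ x ∈ S p, R.B p q x ∈ S (p + 1)
  he : Sinf = ⊥ → ∀ x ∈ S 0, R.e x = 0
  hf : Sinf = ⊤ → ∀ q, q + 1 < n → ∀ y, R.f q y ∈ S 0

/-- `θ⁺`-semistability: every subrepresentation satisfies
`Σ_p dim S_p ≤ (Σ_p v_p) · dim S_∞`. -/
def Semistable (d n u : ℕ) (v : ℕ → ℕ) (R : FRep d n u v) : Prop :=
  ∀ (S : (p : ℕ) → Submodule ℂ (Fin (v p) → ℂ)) (Sinf : Submodule ℂ ℂ),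
    IsSubrep d n u v R S Sinf →
      ∑ p ∈ Finset.range d, Module.finrank ℂ (S p)
        ≤ (∑ p ∈ Finset.range d, v p) * Module.finrank ℂ Sinf

/-- `θ⁺`-stability: every subrepresentation other than the zero one and the whole one
satisfies the strict inequality. -/
def Stable (d n u : ℕ) (v : ℕ → ℕ) (R : FRep d n u v) : Prop :=
  ∀ (S : (p : ℕ) → Submodule ℂ (Fin (v p) → ℂ)) (Sinf : Submodule ℂ ℂ),
    IsSubrep d n u v R S Sinf →
      ¬((∀ p, p < d → S p = ⊥) ∧ Sinf = ⊥) →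
      ¬((∀ p, p < d → S p = ⊤) ∧ Sinf = ⊤) →
        ∑ p ∈ Finset.range d, Module.finrank ℂ (S p)
          < (∑ p ∈ Finset.range d, v p) * Module.finrank ℂ Sinf

/-- first assertion of Lemma 7.3: a `(v,u)`-dimensional representation of
`F_{d,n}` is `θ⁺`-semistable if and only if it is `θ⁺`-stable. -/
theorem semistable_iff_stable (d n u : ℕ) (hd : 1 ≤ d) (hn : 1 ≤ n) (v : ℕ → ℕ)
    (hu : v 0 < u) (hv : ∀ p, p + 1 < d → v (p + 1) < v p) (hpos : 0 < v (d - 1))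
    (R : FRep d n u v) :
    Semistable d n u v R ↔ Stable d n u v R := by
  constructor
  · intro h S Sinf hS h0 h1
    have hle := h S Sinf hS
    refine lt_of_le_of_ne hle ?_
    intro heq
    rcases eq_bot_or_eq_top Sinf with hb | ht
    · apply h0
      refine ⟨fun p hp => ?_, hb⟩
      rw [hb, finrank_bot, mul_zero, Finset.sum_eq_zero_iff] at heq
      exact Submodule.finrank_eq_zero.mp (heq p (Finset.mem_range.mpr hp))
    · apply h1
      refine ⟨fun p hp => ?_, ht⟩
      rw [ht, finrank_top, Module.finrank_self, mul_one] at heq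
      have hall := (Finset.sum_eq_sum_iff_of_le (fun i _ => by
        simpa using Submodule.finrank_le (S i))).mp heq p (Finset.mem_range.mpr hp)
      apply Submodule.eq_top_of_finrank_eq
      simpa using hall
  · intro h S Sinf hS
    by_cases h0 : (∀ p, p < d → S p = ⊥) ∧ Sinf = ⊥
    · have hz : ∑ p ∈ Finset.range d, Module.finrank ℂ (S p) = 0 :=
        Finset.sum_eq_zero fun p hp => by
          rw [h0.1 p (Finset.mem_range.mp hp), finrank_bot]
      rw [hz]
      exact Nat.zero_le _
    by_cases h1 : (∀ p, p < d → S p = ⊤) ∧ Sinf = ⊤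
    · rw [h1.2, finrank_top, Module.finrank_self, mul_one]
      exact Finset.sum_le_sum fun i _ => by
        simpa using Submodule.finrank_le (S i)
    exact (h S Sinf hS h0 h1).le
end

section
/- A representation of the algebra F_{d,n} of dimension vector (v,u) is θ⁺-semistable if and only if the linear maps e, A_1, …, A_{d−1} are all injective. Equivalently, e and all A_p are injective if and only if every tuple of subspaces (S_0,…,S_{d−1}) with S_p ⊆ ℂ^{v_p}, A_p(S_p) ⊆ S_{p−1} and B_{p,q}(S_{p−1}) ⊆ S_p for all p, q, and S_0 ⊆ ker e, is the zero tuple. -/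
/-- The composite `e ∘ A₁ ∘ ⋯ ∘ A_p : ℂ^{v_p} → ℂ^u`. -/
def FRep.comps {d n u : ℕ} {v : ℕ → ℕ} (R : FRep d n u v) :
    (p : ℕ) → (Fin (v p) → ℂ) →ₗ[ℂ] (Fin u → ℂ)
  | 0 => R.e
  | p + 1 => (R.comps p).comp (R.A p)

theorem FRep.comps_B {d n u : ℕ} {v : ℕ → ℕ} (R : FRep d n u v) (q : ℕ) (hq : q + 1 < n) :
    ∀ p, p + 1 < d → ∀ x, R.comps p x = 0 → R.comps (p + 1) (R.B p q x) = 0 := by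
  intro p
  induction p with
  | zero =>
    intro hp x hx
    have h := LinearMap.congr_fun (R.rel2 (by omega) q hq) x
    have hx' : R.e x = 0 := hx
    simp [hx'] at h
    change R.e (R.A 0 (R.B 0 q x)) = 0
    rw [h, map_zero]
  | succ p ih =>
    intro hp x hx
    have h := LinearMap.congr_fun (R.rel3 p q (by omega) hq) x
    simp only [LinearMap.comp_apply] at h
    change R.comps (p + 1) (R.A (p + 1) (R.B (p + 1) q x)) = 0
    rw [h]
    exact ih (by omega) _ hx

/-- second assertion of Lemma 7.3: a representation of `F_{d,n}` is
`θ⁺`-semistable iff `e, A₁, …, A_{d−1}` are all injective; equivalently, `e` and all `A_p`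
are injective iff every tuple of subspaces `(S₀,…,S_{d−1})` preserved by the `A_p` and
`B_{p,q}` and with `S₀ ⊆ ker e` is the zero tuple. -/
theorem semistable_iff_injective (d n u : ℕ) (hd : 1 ≤ d) (hn : 1 ≤ n) (v : ℕ → ℕ)
    (hu : v 0 < u) (hv : ∀ p, p + 1 < d → v (p + 1) < v p) (hpos : 0 < v (d - 1))
    (R : FRep d n u v) :
    (Semistable d n u v R ↔
      (Function.Injective R.e ∧ ∀ p, p + 1 < d → Function.Injective (R.A p))) ∧
    ((Function.Injective R.e ∧ ∀ p, p + 1 < d → Function.Injective (R.A p)) ↔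
      ∀ S : (p : ℕ) → Submodule ℂ (Fin (v p) → ℂ),
        (∀ p, p + 1 < d → ∀ x ∈ S (p + 1), R.A p x ∈ S p) →
        (∀ p q, p + 1 < d → q + 1 < n → ∀ x ∈ S p, R.B p q x ∈ S (p + 1)) →
        (∀ x ∈ S 0, R.e x = 0) →
        ∀ p, p < d → S p = ⊥) := by
  have h2 : (Function.Injective R.e ∧ ∀ p, p + 1 < d → Function.Injective (R.A p)) ↔
      ∀ S : (p : ℕ) → Submodule ℂ (Fin (v p) → ℂ),
        (∀ p, p + 1 < d → ∀ x ∈ S (p + 1), R.A p x ∈ S p) →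
        (∀ p q, p + 1 < d → q + 1 < n → ∀ x ∈ S p, R.B p q x ∈ S (p + 1)) →
        (∀ x ∈ S 0, R.e x = 0) →
        ∀ p, p < d → S p = ⊥ := by
    constructor
    · rintro ⟨he, hA⟩ S hSA _ hSe p
      induction p with
      | zero =>
        intro _
        rw [Submodule.eq_bot_iff]
        intro x hx
        exact he (by rw [hSe x hx, map_zero])
      | succ p ih =>
        intro hp
        rw [Submodule.eq_bot_iff]
        intro x hx
        have h := hSA p hp x hx
        rw [ih (by omega), Submodule.mem_bot] at h
        exact hA p hp (by rw [h, map_zero])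
    · intro h
      have hk := h (fun p => LinearMap.ker (R.comps p))
        (fun p _ x hx => hx)
        (fun p q hp hq x hx => R.comps_B q hq p hp x hx)
        (fun x hx => hx)
      refine ⟨LinearMap.ker_eq_bot.mp (hk 0 (by omega)), fun p hp => ?_⟩
      have h1 : Function.Injective (R.comps (p + 1)) := LinearMap.ker_eq_bot.mp (hk (p + 1) hp)
      have h3 : Function.Injective (R.comps p ∘ R.A p) := h1
      exact h3.of_comp
  refine ⟨?_, h2⟩
  rw [h2]
  constructor
  · intro hs S hA hB he p hp
    have h := hs S ⊥ ⟨hA, hB, fun _ => he, fun hbt => absurd hbt bot_ne_top⟩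
    rw [finrank_bot, mul_zero, Nat.le_zero, Finset.sum_eq_zero_iff] at h
    exact Submodule.finrank_eq_zero.mp (h p (Finset.mem_range.mpr hp))
  · intro h S Sinf hS
    rcases eq_bot_or_eq_top Sinf with hb | ht
    · have hz := h S hS.hA hS.hB (hS.he hb)
      rw [Finset.sum_eq_zero]
      · exact Nat.zero_le _
      · intro p hp
        rw [hz p (Finset.mem_range.mp hp), finrank_bot]
    · rw [ht, finrank_top, Module.finrank_self, mul_one]
      refine Finset.sum_le_sum fun p _ => ?_
      simpa using (S p).finrank_le
end

section
/- Let n ≥ 2 and a ≥ 1 be integers, and let β_0, β_1 ∈ Mat_{(n−1)a × na}(ℂ). Let Φ be the square matrix of size n(n−1)a with n block rows of height (n−1)a and n−1 block columns of width na, whose (p,q) block equals β_0 if p = q, equals β_1 if p = q+1, and vanishes otherwise. If Φ is invertible, then there exist χ ∈ GL((n−1)a,ℂ) and ψ ∈ GL(na,ℂ) such that χ·β_0·ψ^{−1} = (I_{(n−1)a} | 0) and χ·β_1·ψ^{−1} = (0 | I_{(n−1)a}). -/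
open Matrix

/-- The square matrix `Φ` of size `n(n−1)a`, with `n` block rows of height `(n−1)a`
(indexed by `Fin n × Fin ((n−1)a)`) and `n−1` block columns of width `na`
(indexed by `Fin (n−1) × Fin (na)`), whose `(p,q)` block is `β₀` if `p = q`,
`β₁` if `p = q + 1`, and `0` otherwise. -/
def PhiMat (n a : ℕ) (β0 β1 : Matrix (Fin ((n - 1) * a)) (Fin (n * a)) ℂ) :
    Matrix (Fin n × Fin ((n - 1) * a)) (Fin (n - 1) × Fin (n * a)) ℂ :=
  fun pi qj =>
    if pi.1.val = qj.1.val then β0 pi.2 qj.2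
    else if pi.1.val = qj.1.val + 1 then β1 pi.2 qj.2
    else 0

/-- The `(n−1)a × na` matrix `(I | 0)`. -/
def D0 (n a : ℕ) : Matrix (Fin ((n - 1) * a)) (Fin (n * a)) ℂ :=
  fun i j => if j.val = i.val then 1 else 0

/-- The `(n−1)a × na` matrix `(0 | I)`. -/
def D1 (n a : ℕ) : Matrix (Fin ((n - 1) * a)) (Fin (n * a)) ℂ :=
  fun i j => if j.val = i.val + a then 1 else 0

/-- `PhiMat` reindexed -/
def PhiM (m a : ℕ) (β0 β1 : Matrix (Fin (m * a)) (Fin ((m+1) * a)) ℂ) :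
    Matrix (Fin (m+1) × Fin (m * a)) (Fin m × Fin ((m+1) * a)) ℂ :=
  fun pi qj =>
    if pi.1.val = qj.1.val then β0 pi.2 qj.2
    else if pi.1.val = qj.1.val + 1 then β1 pi.2 qj.2
    else 0

/-- `D0` reindexed -/
def E0 (m a : ℕ) : Matrix (Fin (m * a)) (Fin ((m+1) * a)) ℂ :=
  fun i j => if j.val = i.val then 1 else 0

/-- `D1` reindexed -/
def E1 (m a : ℕ) : Matrix (Fin (m * a)) (Fin ((m+1) * a)) ℂ :=
  fun i j => if j.val = i.val + a then 1 else 0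

/-- independence lemma. -/
theorem seq_indep {V W : Type*} [AddCommGroup V] [Module ℂ V] [AddCommGroup W] [Module ℂ W]
    (m : ℕ) (b0 b1 : V →ₗ[ℂ] W)
    (hZ : ∀ u : ℤ → V, (∀ i, b0 (u i) = b1 (u (i+1))) → ∀ c : ℤ,
      (∀ i, i < c ∨ c + m ≤ i → u i = 0) → ∀ i, u i = 0)
    (k : ℕ → ℤ → V) (hk : ∀ j i, b0 (k j i) = b1 (k j (i+1)))
    (hs : ∀ j i, i < 0 ∨ (m : ℤ) < i → k j i = 0)
    (h0 : ∑ j ∈ Finset.range (m+1), k j j = 0) :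
    ∀ j, j < m + 1 → ∀ i, k j i = 0 := by
  set P : ℤ → V := fun l => ∑ j ∈ Finset.range (m+1), k j (l + j) with hP
  have hPr : ∀ l, b0 (P l) = b1 (P (l+1)) := by
    intro l
    simp only [hP, map_sum]
    refine Finset.sum_congr rfl fun j _ => ?_
    rw [hk]; congr 2; ring
  have hP0 : P 0 = 0 := by simpa [hP] using h0
  have hPs : ∀ l, l < -(m:ℤ) ∨ (m:ℤ) < l → P l = 0 := by
    intro l hl
    refine Finset.sum_eq_zero fun j hj => hs _ _ ?_
    have := Finset.mem_range.1 hj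
    omega
  have hlow := hZ (fun l => if l < 0 then P l else 0) (by
    intro l
    rcases lt_trichotomy l (-1) with h | h | h
    · rw [if_pos (by omega), if_pos (by omega)]; exact hPr l
    · subst h
      have := hPr (-1)
      simp [hP0] at this
      simp [this]
    · rw [if_neg (by omega), if_neg (by omega)]; simp) (-(m:ℤ)) (by
    intro l hl
    try dsimp only
    split_ifs with h
    · exact hPs _ (by omega)
    · rfl)
  have hhigh := hZ (fun l => if 0 < l then P l else 0) (by
    intro l
    rcases lt_trichotomy l 0 with h | h | h
    · rw [if_neg (by omega), if_neg (by omega)]; simp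
    · subst h
      have := hPr 0
      simp [hP0] at this
      simp [← this]
    · rw [if_pos (by omega), if_pos (by omega)]; exact hPr l) 1 (by
    intro l hl
    try dsimp only
    split_ifs with h
    · exact hPs _ (by omega)
    · rfl)
  have hPz : ∀ l, P l = 0 := by
    intro l
    rcases lt_trichotomy l 0 with h | h | h
    · simpa [h] using hlow l
    · rw [h, hP0]
    · simpa [h] using hhigh l
  intro j
  induction j using Nat.strong_induction_on with
  | _ j ih =>
    intro hj
    have h1 : k j m = 0 := by
      have h2 := hPz ((m:ℤ) - j)
      simp only [hP] at h2
      rw [Finset.sum_eq_single j] at h2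
      · simpa using h2
      · intro i hi hij
        rcases lt_or_gt_of_ne hij with h | h
        · exact ih i h (Finset.mem_range.1 hi) _
        · exact hs _ _ (by omega)
      · intro h; exact absurd (Finset.mem_range.2 hj) h
    refine hZ (k j) (hk j) 0 fun i hi => ?_
    by_cases h : i = m
    · rw [h, h1]
    · exact hs _ _ (by omega)

/-- zero extension of a finite sequence to the integers -/
def zext {V : Type*} [AddCommGroup V] [Module ℂ V] (n : ℕ) : (Fin n → V) →ₗ[ℂ] (ℤ → V) where
  toFun u i := if h : 0 ≤ i ∧ i < n then u ⟨i.toNat, by omega⟩ else 0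
  map_add' u v := by ext i; by_cases h : 0 ≤ i ∧ i < n <;> simp [h]
  map_smul' c v := by ext i; by_cases h : 0 ≤ i ∧ i < n <;> simp [h]

theorem zext_inj {V : Type*} [AddCommGroup V] [Module ℂ V] (n : ℕ) :
    Function.Injective (zext (V := V) n) := by
  intro u v h
  ext i
  have := congrFun h (i : ℤ)
  simpa [zext] using this

/-- the defining map -/
def relMap {V W : Type*} [AddCommGroup V] [Module ℂ V] [AddCommGroup W] [Module ℂ W]
    (n : ℕ) (b0 b1 : V →ₗ[ℂ] W) : (Fin n → V) →ₗ[ℂ] (Fin (n+1) → W) where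
  toFun u i := b0 (zext n u ((i:ℤ) - 1)) - b1 (zext n u i)
  map_add' u v := by ext i; simp; abel
  map_smul' c v := by ext i; simp [smul_sub]

theorem exists_seqs {V W : Type*} [AddCommGroup V] [Module ℂ V] [AddCommGroup W] [Module ℂ W]
    [FiniteDimensional ℂ V] [FiniteDimensional ℂ W]
    (m a : ℕ) (b0 b1 : V →ₗ[ℂ] W) (hV : Module.finrank ℂ V = (m+1) * a)
    (hW : Module.finrank ℂ W = m * a) :
    ∃ k : Fin a → ℤ → V, LinearIndependent ℂ k ∧ (∀ s i, b0 (k s i) = b1 (k s (i+1))) ∧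
      ∀ s i, i < 0 ∨ (m : ℤ) < i → k s i = 0 := by
  set L := relMap (m+1) b0 b1 with hL
  have h1 := L.finrank_range_add_finrank_ker
  have h2 : Module.finrank ℂ (LinearMap.range L) ≤ _ := Submodule.finrank_le _
  rw [Module.finrank_pi_fintype] at h1 h2
  simp only [hV, hW, Finset.sum_const, Finset.card_univ, Fintype.card_fin, smul_eq_mul] at h1 h2
  have h3 : a ≤ Module.finrank ℂ (LinearMap.ker L) := by nlinarith
  obtain ⟨f, hf⟩ := exists_linearIndependent_of_le_finrank h3
  have hsupp : ∀ (u : Fin (m+1) → V) (i : ℤ), i < 0 ∨ (m : ℤ) < i → zext (m+1) u i = 0 := by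
    intro u i hi
    simp only [zext, LinearMap.coe_mk, AddHom.coe_mk]
    rw [dif_neg (by push_cast; omega)]
  refine ⟨fun s => zext (m+1) (f s), ?_, ?_, ?_⟩
  · have := (hf.map' (LinearMap.ker L).subtype (Submodule.ker_subtype _)).map'
      (zext (V := V) (m+1)) (LinearMap.ker_eq_bot.2 (zext_inj _))
    exact this
  · intro s i
    by_cases h : i < -1 ∨ (m:ℤ) < i
    · dsimp only
      rw [hsupp _ i (by omega), hsupp _ (i+1) (by omega)]; simp
    · have h4 := congrFun (LinearMap.mem_ker.1 (f s).2) ⟨(i+1).toNat, by omega⟩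
      simp only [hL, relMap, LinearMap.coe_mk, AddHom.coe_mk, Pi.zero_apply] at h4
      have h5 : (((i+1).toNat : ℕ) : ℤ) = i + 1 := by omega
      rw [h5] at h4
      simpa [sub_eq_zero] using h4
  · intro s i hi
    exact hsupp _ _ hi

theorem phi_zero (m a : ℕ)
    (β0 β1 : Matrix (Fin (m * a)) (Fin ((m+1) * a)) ℂ)
    (Ψ : Matrix (Fin m × Fin ((m+1) * a)) (Fin (m+1) × Fin (m * a)) ℂ)
    (hΨ2 : Ψ * PhiM m a β0 β1 = 1)
    (u : ℤ → Fin ((m+1) * a) → ℂ) (hu : ∀ i, β0 *ᵥ (u i) = β1 *ᵥ (u (i+1))) (c : ℤ)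
    (hs : ∀ i, i < c ∨ c + m ≤ i → u i = 0) (i : ℤ) : u i = 0 := by
  set v : Fin m × Fin ((m+1) * a) → ℂ := fun q => (-1)^(q.1:ℕ) * u (c + m - 1 - (q.1:ℕ)) q.2 with hv
  have key : PhiM m a β0 β1 *ᵥ v = 0 := by
    ext ⟨p, x⟩
    have e1 : (PhiM m a β0 β1 *ᵥ v) (p, x) =
      ∑ q : Fin m, ((fun q : ℕ => if (p:ℕ) = q then (-1)^q * (β0 *ᵥ u (c+m-1-q)) x else
        if (p:ℕ) = q + 1 then (-1)^q * (β1 *ᵥ u (c+m-1-q)) x else 0) (q:ℕ)) := by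
      simp only [Matrix.mulVec, dotProduct, Fintype.sum_prod_type]
      refine Finset.sum_congr rfl fun q _ => ?_
      simp only [PhiM, hv]
      split_ifs
      · rw [Finset.mul_sum]; refine Finset.sum_congr rfl fun y _ => by ring
      · rw [Finset.mul_sum]; refine Finset.sum_congr rfl fun y _ => by ring
      · simp
    rw [e1, Fin.sum_univ_eq_sum_range (fun q : ℕ => if (p:ℕ) = q then (-1)^q * (β0 *ᵥ u (c+m-1-q)) x else
        if (p:ℕ) = q + 1 then (-1)^q * (β1 *ᵥ u (c+m-1-q)) x else 0)]
    have e2 : ∀ q : ℕ, (if (p:ℕ) = q then (-1)^q * (β0 *ᵥ u (c+m-1-q)) x else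
        if (p:ℕ) = q + 1 then (-1)^q * (β1 *ᵥ u (c+m-1-q)) x else 0) =
        (if q = (p:ℕ) then (-1)^q * (β0 *ᵥ u (c+m-1-q)) x else 0) +
        (if q + 1 = (p:ℕ) then (-1)^q * (β1 *ᵥ u (c+m-1-q)) x else 0) := by
      intro q
      by_cases h : (p:ℕ) = q
      · simp [h]
      · simp [h, Ne.symm h, eq_comm]
    rw [Finset.sum_congr rfl fun q _ => e2 q, Finset.sum_add_distrib]
    have hp := p.2
    have e3 : ∑ q ∈ Finset.range m, (if q = (p:ℕ) then (-1:ℂ)^q * (β0 *ᵥ u (c+m-1-q)) x else 0)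
        = (-1)^(p:ℕ) * (β0 *ᵥ u (c+m-1-(p:ℕ))) x := by
      rw [Finset.sum_ite_eq']
      split_ifs with h
      · rfl
      · rw [hs _ (by simp at h; omega)]; simp
    have e4 : ∑ q ∈ Finset.range m, (if q + 1 = (p:ℕ) then (-1:ℂ)^q * (β1 *ᵥ u (c+m-1-q)) x else 0)
        = -((-1)^(p:ℕ) * (β1 *ᵥ u (c+m-1-(p:ℕ)+1)) x) := by
      rcases Nat.eq_zero_or_pos (p:ℕ) with h | h
      · rw [h, hs (c+m-1-(0:ℕ)+1) (by push_cast; omega)]; simp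
      · obtain ⟨r, hr⟩ : ∃ r, (p:ℕ) = r + 1 := ⟨p - 1, by omega⟩
        rw [hr]
        simp only [Nat.add_right_cancel_iff]
        rw [Finset.sum_ite_eq', if_pos (by simp; omega)]
        have : c + m - 1 - ((r+1 : ℕ):ℤ) + 1 = c + m - 1 - r := by push_cast; ring
        rw [this]; ring
    rw [e3, e4, hu]; simp
  have hv0 : v = 0 := by
    have := congrArg (fun w => Ψ *ᵥ w) key
    simpa [Matrix.mulVec_mulVec, hΨ2] using this
  by_cases h : i < c ∨ c + m ≤ i
  · exact hs i h
  · ext y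
    have := congrFun hv0 (⟨(c+m-1-i).toNat, by omega⟩, y)
    simp only [hv, Pi.zero_apply] at this
    have h5 : c + m - 1 - (((c+m-1-i).toNat : ℕ) : ℤ) = i := by omega
    rw [h5] at this
    simpa using this

theorem pnf_aux (m a : ℕ) (hm : 1 ≤ m) (ha : 1 ≤ a)
    (β0 β1 : Matrix (Fin (m * a)) (Fin ((m+1) * a)) ℂ)
    (Ψ : Matrix (Fin m × Fin ((m+1) * a)) (Fin (m+1) × Fin (m * a)) ℂ)
    (hΨ1 : PhiM m a β0 β1 * Ψ = 1)
    (hΨ2 : Ψ * PhiM m a β0 β1 = 1) :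
    ∃ (χ : GL (Fin (m * a)) ℂ) (ψ : GL (Fin ((m+1) * a)) ℂ),
      (χ : Matrix (Fin (m * a)) (Fin (m * a)) ℂ) * β0
          * ((ψ⁻¹ : GL (Fin ((m+1) * a)) ℂ) : Matrix (Fin ((m+1)*a)) (Fin ((m+1)*a)) ℂ) = E0 m a ∧
      (χ : Matrix (Fin (m * a)) (Fin (m * a)) ℂ) * β1
          * ((ψ⁻¹ : GL (Fin ((m+1) * a)) ℂ) : Matrix (Fin ((m+1)*a)) (Fin ((m+1)*a)) ℂ) = E1 m a := by
  have hZ := phi_zero m a β0 β1 Ψ hΨ2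
  obtain ⟨k, hli, hkr, hks⟩ := exists_seqs m a β0.mulVecLin β1.mulVecLin (by simp) (by simp)
  have hmod : ∀ j : ℕ, j % a < a := fun j => Nat.mod_lt _ ha
  -- the vectors e_j for every natural number j
  set e : ℕ → Fin ((m+1)*a) → ℂ := fun j => k ⟨j % a, hmod j⟩ ((j / a : ℕ) : ℤ) with he
  have hstep : ∀ j, β0 *ᵥ e j = β1 *ᵥ e (j + a) := by
    intro j
    have h1 : (j + a) / a = j / a + 1 := Nat.add_div_right _ ha
    have h2 := hkr ⟨j % a, hmod j⟩ ((j / a : ℕ) : ℤ)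
    simp only [he, h1, Nat.add_mod_right]
    simpa using h2
  have hfirst : ∀ j, j < a → β1 *ᵥ e j = 0 := by
    intro j hj
    have h2 := hkr ⟨j % a, hmod j⟩ (-1)
    rw [hks _ (-1) (by omega)] at h2
    simp only [he, Nat.div_eq_of_lt hj]
    simpa using h2.symm
  have hlast : ∀ j, m * a ≤ j → β0 *ᵥ e j = 0 := by
    intro j hj
    have h1 : m ≤ j / a := (Nat.le_div_iff_mul_le ha).2 hj
    have h2 := hkr ⟨j % a, hmod j⟩ ((j / a : ℕ) : ℤ)
    rw [hks _ (((j / a : ℕ) : ℤ) + 1) (by right; omega)] at h2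
    simpa [he] using h2
  have hind : LinearIndependent ℂ (fun j : Fin ((m+1)*a) => e j) := by
    rw [Fintype.linearIndependent_iff]
    intro g hg
    set K : ℕ → ℤ → Fin ((m+1)*a) → ℂ := fun j =>
      if h : j < m + 1 then ∑ s : Fin a, g (finProdFinEquiv (⟨j, h⟩, s)) • k s else 0 with hK
    have hall := seq_indep m β0.mulVecLin β1.mulVecLin hZ K (by
        intro j i
        simp only [hK]
        split_ifs
        · simp only [Finset.sum_apply, Pi.smul_apply, map_sum, map_smul, hkr]
        · simp) (by
        intro j i hi
        simp only [hK]
        split_ifs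
        · simp [Finset.sum_apply, hks _ i hi]
        · simp) (by
        rw [← Fin.sum_univ_eq_sum_range (fun j => K j (j:ℤ)), ← hg,
          ← finProdFinEquiv.sum_comp, Fintype.sum_prod_type]
        refine Finset.sum_congr rfl fun j _ => ?_
        simp only [hK, dif_pos j.2, Finset.sum_apply, Pi.smul_apply]
        refine Finset.sum_congr rfl fun s _ => ?_
        simp only [he, finProdFinEquiv_apply_val]
        have h1 : ((s:ℕ) + a * j) % a = s := by
          rw [Nat.add_mul_mod_self_left, Nat.mod_eq_of_lt s.2]
        have h2 : ((s:ℕ) + a * j) / a = j := by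
          rw [Nat.add_mul_div_left _ _ ha, Nat.div_eq_of_lt s.2, zero_add]
        simp only [h1, h2])
    intro x
    obtain ⟨⟨j, s⟩, rfl⟩ := finProdFinEquiv.surjective x
    have h1 : K j = 0 := funext (hall j j.2)
    simp only [hK, dif_pos j.2] at h1
    exact Fintype.linearIndependent_iff.1 hli _ h1 s
  set E : Matrix (Fin ((m+1)*a)) (Fin ((m+1)*a)) ℂ := Matrix.of fun x j => e j x with hE
  have hEu : IsUnit E := Matrix.linearIndependent_cols_iff_isUnit.1 hind
  set F : Matrix (Fin (m*a)) (Fin (m*a)) ℂ := Matrix.of fun x j => (β0 *ᵥ e j) x with hF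
  have hle : m * a + a = (m+1) * a := by ring
  have hD0 : β0 * E = F * E0 m a := by
    ext x j
    have h1 : (β0 * E) x j = (β0 *ᵥ e j) x := rfl
    rw [h1, Matrix.mul_apply]
    by_cases h : (j:ℕ) < m * a
    · rw [Finset.sum_eq_single ⟨j, h⟩]
      · simp [E0, hF]
      · intro b _ hb
        have : ¬ (j:ℕ) = b := fun h' => hb (Fin.ext h'.symm)
        simp [E0, this]
      · simp
    · rw [hlast _ (by omega), Finset.sum_eq_zero]
      · rfl
      · intro b _
        have hb : (b:ℕ) < m * a := b.2
        have : ¬ (j:ℕ) = b := by omega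
        simp [E0, this]
  have hD1 : β1 * E = F * E1 m a := by
    ext x j
    have h1 : (β1 * E) x j = (β1 *ᵥ e j) x := rfl
    rw [h1, Matrix.mul_apply]
    have hj := j.2
    by_cases h : a ≤ (j:ℕ)
    · have h3 : (j:ℕ) - a + a = j := by omega
      rw [Finset.sum_eq_single ⟨j - a, by omega⟩]
      · simp [E1, hF, h3, hstep]
      · intro b _ hb
        have : ¬ (j:ℕ) = b + a := fun h' => hb (Fin.ext (by simp; omega))
        simp [E1, this]
      · simp
    · rw [hfirst _ (by omega), Finset.sum_eq_zero]
      · rfl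
      · intro b _
        have : ¬ (j:ℕ) = b + a := by omega
        simp [E1, this]
  have hR : ∃ R : Matrix (Fin ((m+1)*a)) (Fin (m*a)) ℂ, β0 * R = 1 := by
    refine ⟨Matrix.of fun l j => Ψ (⟨0, hm⟩, l) (0, j), ?_⟩
    ext x y
    have h1 := congrFun (congrFun hΨ1 (0, x)) (0, y)
    rw [Matrix.mul_apply, Fintype.sum_prod_type, Finset.sum_eq_single ⟨0, hm⟩] at h1
    · rw [Matrix.mul_apply]
      simpa [PhiM, Matrix.one_apply] using h1
    · intro q _ hq
      have : ¬ 0 = (q:ℕ) := fun h => hq (Fin.ext h.symm)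
      simp [PhiM, this]
    · simp
  obtain ⟨R, hR⟩ := hR
  obtain ⟨Eu, hEu⟩ := hEu
  have hFinv : F * (E0 m a * ((Eu⁻¹ : GL (Fin ((m+1)*a)) ℂ) : Matrix (Fin ((m+1)*a)) (Fin ((m+1)*a)) ℂ) * R) = 1 := by
    have h1 : E * ((Eu⁻¹ : GL (Fin ((m+1)*a)) ℂ) : Matrix (Fin ((m+1)*a)) (Fin ((m+1)*a)) ℂ) = 1 := by rw [← hEu]; exact Eu.mul_inv
    calc _ = (F * E0 m a) * ((Eu⁻¹ : GL (Fin ((m+1)*a)) ℂ) : Matrix (Fin ((m+1)*a)) (Fin ((m+1)*a)) ℂ) * R := by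
            simp only [Matrix.mul_assoc]
      _ = β0 * (E * ((Eu⁻¹ : GL (Fin ((m+1)*a)) ℂ) : Matrix (Fin ((m+1)*a)) (Fin ((m+1)*a)) ℂ)) * R := by
            rw [← hD0]; simp only [Matrix.mul_assoc]
      _ = 1 := by rw [h1, Matrix.mul_one, hR]
  have hFinv' := mul_eq_one_comm.1 hFinv
  refine ⟨⟨_, F, hFinv', hFinv⟩, Eu⁻¹, ?_, ?_⟩
  · rw [inv_inv, hEu, Matrix.mul_assoc, hD0, ← Matrix.mul_assoc]
    erw [hFinv']
    exact Matrix.one_mul _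
  · rw [inv_inv, hEu, Matrix.mul_assoc, hD1, ← Matrix.mul_assoc]
    erw [hFinv']
    exact Matrix.one_mul _

/-- normal form from the proof of Lemma 6.3: if `Φ` is invertible, then
there exist `χ ∈ GL((n−1)a, ℂ)` and `ψ ∈ GL(na, ℂ)` such that `χ·β₀·ψ⁻¹ = (I | 0)` and
`χ·β₁·ψ⁻¹ = (0 | I)`. -/
theorem pair_normal_form (n a : ℕ) (hn : 2 ≤ n) (ha : 1 ≤ a)
    (β0 β1 : Matrix (Fin ((n - 1) * a)) (Fin (n * a)) ℂ)
    (Ψ : Matrix (Fin (n - 1) × Fin (n * a)) (Fin n × Fin ((n - 1) * a)) ℂ)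
    (hΨ1 : PhiMat n a β0 β1 * Ψ = 1) (hΨ2 : Ψ * PhiMat n a β0 β1 = 1) :
    ∃ (χ : GL (Fin ((n - 1) * a)) ℂ) (ψ : GL (Fin (n * a)) ℂ),
      (χ : Matrix (Fin ((n - 1) * a)) (Fin ((n - 1) * a)) ℂ) * β0
          * ((ψ⁻¹ : GL (Fin (n * a)) ℂ) : Matrix (Fin (n * a)) (Fin (n * a)) ℂ) = D0 n a ∧
      (χ : Matrix (Fin ((n - 1) * a)) (Fin ((n - 1) * a)) ℂ) * β1
          * ((ψ⁻¹ : GL (Fin (n * a)) ℂ) : Matrix (Fin (n * a)) (Fin (n * a)) ℂ) = D1 n a := by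
  obtain ⟨m, rfl⟩ : ∃ m, n = m + 1 := ⟨n - 1, by omega⟩
  exact pnf_aux m a (by omega) ha β0 β1 Ψ hΨ1 hΨ2
end

section
/- Let n ≥ 2 and a ≥ 1 be integers, and let D_0 = (I_{(n−1)a} | 0) and D_1 = (0 | I_{(n−1)a}) be the (n−1)a × na matrices whose first (respectively last) (n−1)a columns form the identity matrix. A pair (ψ, χ) ∈ GL(na,ℂ) × GL((n−1)a,ℂ) satisfies χ·D_0 = D_0·ψ and χ·D_1 = D_1·ψ if and only if there exists A ∈ GL(a,ℂ) such that ψ is the block-diagonal matrix with n diagonal blocks all equal to A and χ is the block-diagonal matrix with n−1 diagonal blocks all equal to A. -/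
open Matrix

/-- The block-diagonal `ma × ma` matrix with `m` diagonal blocks all equal to the
`a × a` matrix `A`. -/
def blockDiagRep (m a : ℕ) (ha : 0 < a) (A : Matrix (Fin a) (Fin a) ℂ) :
    Matrix (Fin (m * a)) (Fin (m * a)) ℂ :=
  fun i j =>
    if i.val / a = j.val / a then
      A ⟨i.val % a, Nat.mod_lt _ ha⟩ ⟨j.val % a, Nat.mod_lt _ ha⟩
    else 0

theorem aux_mul_D0 (n a : ℕ) (M : Matrix (Fin ((n - 1) * a)) (Fin ((n - 1) * a)) ℂ)
    (i : Fin ((n - 1) * a)) (j : Fin (n * a)) :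
    (M * D0 n a) i j = if h : j.val < (n - 1) * a then M i ⟨j.val, h⟩ else 0 := by
  rw [Matrix.mul_apply]
  split_ifs with h
  · rw [Finset.sum_eq_single ⟨j.val, h⟩]
    · simp [D0]
    · intro b _ hb
      have : ¬ j.val = b.val := fun e => hb (Fin.ext e.symm)
      simp [D0, this]
    · simp
  · refine Finset.sum_eq_zero fun b _ => ?_
    have : ¬ j.val = b.val := fun e => h (e ▸ b.isLt)
    simp [D0, this]

theorem aux_mul_D1 (n a : ℕ) (hN : n * a = (n - 1) * a + a)
    (M : Matrix (Fin ((n - 1) * a)) (Fin ((n - 1) * a)) ℂ)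
    (i : Fin ((n - 1) * a)) (j : Fin (n * a)) :
    (M * D1 n a) i j = if h : a ≤ j.val then
      M i ⟨j.val - a, by have := j.isLt; omega⟩ else 0 := by
  rw [Matrix.mul_apply]
  split_ifs with h
  · rw [Finset.sum_eq_single ⟨j.val - a, by have := j.isLt; omega⟩]
    · have : j.val = j.val - a + a := by omega
      simp [D1, ← this]
    · intro b _ hb
      have : ¬ j.val = b.val + a := fun e => hb (Fin.ext (by simp; omega))
      simp [D1, this]
    · simp
  · refine Finset.sum_eq_zero fun b _ => ?_
    have : ¬ j.val = b.val + a := fun e => h (by omega)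
    simp [D1, this]

theorem aux_D0_mul (n a : ℕ) (hN : n * a = (n - 1) * a + a)
    (M : Matrix (Fin (n * a)) (Fin (n * a)) ℂ)
    (i : Fin ((n - 1) * a)) (j : Fin (n * a)) :
    (D0 n a * M) i j = M ⟨i.val, by have := i.isLt; omega⟩ j := by
  rw [Matrix.mul_apply, Finset.sum_eq_single ⟨i.val, by have := i.isLt; omega⟩]
  · simp [D0]
  · intro b _ hb
    have : ¬ b.val = i.val := fun e => hb (Fin.ext e)
    simp [D0, this]
  · simp

theorem aux_D1_mul (n a : ℕ) (hN : n * a = (n - 1) * a + a)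
    (M : Matrix (Fin (n * a)) (Fin (n * a)) ℂ)
    (i : Fin ((n - 1) * a)) (j : Fin (n * a)) :
    (D1 n a * M) i j = M ⟨i.val + a, by have := i.isLt; omega⟩ j := by
  rw [Matrix.mul_apply, Finset.sum_eq_single ⟨i.val + a, by have := i.isLt; omega⟩]
  · simp [D1]
  · intro b _ hb
    have : ¬ b.val = i.val + a := fun e => hb (Fin.ext e)
    simp [D1, this]
  · simp

theorem aux_det (m a : ℕ) (ha : 0 < a) (A : Matrix (Fin a) (Fin a) ℂ) :
    (blockDiagRep m a ha A).det = A.det ^ m := by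
  have h : blockDiagRep m a ha A =
      Matrix.reindex finProdFinEquiv finProdFinEquiv
        (Matrix.kronecker (1 : Matrix (Fin m) (Fin m) ℂ) A) := by
    ext i j
    simp only [blockDiagRep, Matrix.reindex_apply, Matrix.submatrix_apply,
      Matrix.kronecker, Matrix.kroneckerMap_apply, Matrix.one_apply,
      finProdFinEquiv_symm_apply, Fin.ext_iff, Fin.coe_divNat]
    split_ifs
    · rw [one_mul]; rfl
    · rw [zero_mul]
  rw [h, Matrix.det_reindex_self, Matrix.kronecker, Matrix.det_kronecker]
  simp

/-- Upper blocks vanish. -/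
theorem aux_upper (k a : ℕ) (ha : 0 < a) (P : ℕ → ℕ → ℂ)
    (h1 : ∀ i j, i < k * a → j < k * a → P (i + a) (j + a) = P i j)
    (h2 : ∀ i j, i < k * a → k * a ≤ j → j < k * a + a → P i j = 0) :
    ∀ d i j, k * a + a - j ≤ d → j < k * a + a → i / a < j / a → P i j = 0 := by
  intro d
  induction d with
  | zero => intro i j hd hj; omega
  | succ d ih =>
    intro i j hd hj hij
    have hjk : j / a ≤ k := by
      have : j / a < k + 1 := (Nat.div_lt_iff_lt_mul ha).2 (by rw [Nat.add_mul]; omega)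
      omega
    have hik : i < k * a := (Nat.div_lt_iff_lt_mul ha).1 (by omega)
    by_cases hjm : k * a ≤ j
    · exact h2 i j hik hjm hj
    · rw [← h1 i j hik (by omega)]
      refine ih _ _ (by omega) (by omega) ?_
      rw [Nat.add_div_right _ ha, Nat.add_div_right _ ha]
      omega

theorem aux_main (k a : ℕ) (ha : 0 < a) (P : ℕ → ℕ → ℂ)
    (h1 : ∀ i j, i < k * a → j < k * a → P (i + a) (j + a) = P i j)
    (h2 : ∀ i j, i < k * a → k * a ≤ j → j < k * a + a → P i j = 0)
    (h3 : ∀ i j, i < k * a → j < a → P (i + a) j = 0) :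
    ∀ i, i < k * a + a → ∀ j, j < k * a + a →
      P i j = if i / a = j / a then P (i % a) (j % a) else 0 := by
  intro i
  induction i using Nat.strong_induction_on with
  | _ i ih =>
    intro hi j hj
    by_cases hlt : i / a < j / a
    · rw [if_neg (by omega)]
      exact aux_upper k a ha P h1 h2 _ i j le_rfl hj hlt
    by_cases hia : i < a
    · rw [Nat.div_eq_of_lt hia] at hlt ⊢
      have hj0 : j / a = 0 := Nat.eq_zero_of_not_pos hlt
      have hja : j < a := by
        rcases (Nat.div_eq_zero_iff).1 hj0 with h | h <;> omega
      rw [hj0, if_pos rfl, Nat.mod_eq_of_lt hia, Nat.mod_eq_of_lt hja]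
    · obtain ⟨i', rfl⟩ : ∃ i', i = i' + a := ⟨i - a, by omega⟩
      by_cases hja : j < a
      · rw [h3 i' j (by omega) hja, if_neg]
        rw [Nat.div_eq_of_lt hja, Nat.add_div_right _ ha]
        exact Nat.succ_ne_zero _
      · obtain ⟨j', rfl⟩ : ∃ j', j = j' + a := ⟨j - a, by omega⟩
        rw [h1 i' j' (by omega) (by omega), ih i' (by omega) (by omega) j' (by omega),
          Nat.add_div_right _ ha, Nat.add_div_right _ ha, Nat.add_mod_right, Nat.add_mod_right]
        simp

/-- stabilizer computation from the proof of Lemma 6.3: a pair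
`(ψ, χ) ∈ GL(na,ℂ) × GL((n−1)a,ℂ)` satisfies `χ·D₀ = D₀·ψ` and `χ·D₁ = D₁·ψ` if and only
if there exists `A ∈ GL(a,ℂ)` such that `ψ` is block diagonal with `n` diagonal blocks
equal to `A` and `χ` is block diagonal with `n−1` diagonal blocks equal to `A`. -/
theorem intertwiner_iff_block_diagonal (n a : ℕ) (hn : 2 ≤ n) (ha : 0 < a)
    (ψ : GL (Fin (n * a)) ℂ) (χ : GL (Fin ((n - 1) * a)) ℂ) :
    ((χ : Matrix (Fin ((n - 1) * a)) (Fin ((n - 1) * a)) ℂ) * D0 n a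
        = D0 n a * (ψ : Matrix (Fin (n * a)) (Fin (n * a)) ℂ) ∧
     (χ : Matrix (Fin ((n - 1) * a)) (Fin ((n - 1) * a)) ℂ) * D1 n a
        = D1 n a * (ψ : Matrix (Fin (n * a)) (Fin (n * a)) ℂ)) ↔
    ∃ A : GL (Fin a) ℂ,
      (ψ : Matrix (Fin (n * a)) (Fin (n * a)) ℂ)
          = blockDiagRep n a ha (A : Matrix (Fin a) (Fin a) ℂ) ∧
      (χ : Matrix (Fin ((n - 1) * a)) (Fin ((n - 1) * a)) ℂ)
          = blockDiagRep (n - 1) a ha (A : Matrix (Fin a) (Fin a) ℂ) := by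
  have hN : n * a = (n - 1) * a + a := by
    obtain ⟨k, rfl⟩ : ∃ k, n = k + 1 := ⟨n - 1, by omega⟩
    rw [Nat.add_sub_cancel, Nat.add_mul, one_mul]
  have hma : a ≤ (n - 1) * a := Nat.le_mul_of_pos_left a (by omega)
  constructor
  · rintro ⟨e0, e1⟩
    have E0 := fun i j => congrFun (congrFun e0 i) j
    have E1 := fun i j => congrFun (congrFun e1 i) j
    simp only [aux_mul_D0, aux_D0_mul n a hN] at E0
    simp only [aux_mul_D1 n a hN, aux_D1_mul n a hN] at E1
    let P : ℕ → ℕ → ℂ := fun i j =>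
      if h : i < n * a ∧ j < n * a then ψ.val ⟨i, h.1⟩ ⟨j, h.2⟩ else 0
    have hP : ∀ i j (hi : i < n * a) (hj : j < n * a), P i j = ψ.val ⟨i, hi⟩ ⟨j, hj⟩ :=
      fun i j hi hj => dif_pos ⟨hi, hj⟩
    have key := aux_main (n - 1) a ha P
      (by
        intro i j hi hj
        rw [hP _ _ (by omega) (by omega), hP _ _ (by omega) (by omega)]
        have a0 := E0 ⟨i, hi⟩ ⟨j, by omega⟩
        have a1 := E1 ⟨i, hi⟩ ⟨j + a, by omega⟩
        rw [dif_pos hj] at a0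
        rw [dif_pos (by simp)] at a1
        simp only [Nat.add_sub_cancel] at a1
        rw [← a0, ← a1])
      (by
        intro i j hi hj hj'
        rw [hP _ _ (by omega) (by omega)]
        have a0 := E0 ⟨i, hi⟩ ⟨j, by omega⟩
        rw [dif_neg (by simpa using hj)] at a0
        exact a0.symm)
      (by
        intro i j hi hj
        rw [hP _ _ (by omega) (by omega)]
        have a1 := E1 ⟨i, hi⟩ ⟨j, by omega⟩
        rw [dif_neg (by simpa using hj)] at a1
        exact a1.symm)
    let A : Matrix (Fin a) (Fin a) ℂ := fun i j => P i.val j.val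
    have hψ : ψ.val = blockDiagRep n a ha A := by
      ext i j
      have := key i.val (by have := i.isLt; omega) j.val (by have := j.isLt; omega)
      rw [hP _ _ i.isLt j.isLt] at this
      exact this
    have hχ : χ.val = blockDiagRep (n - 1) a ha A := by
      ext i j
      have hi := i.isLt
      have hj := j.isLt
      have a0 := E0 i ⟨j.val, by omega⟩
      rw [dif_pos hj] at a0
      refine a0.trans ?_
      rw [hψ]
      rfl
    have hdet : IsUnit A.det := by
      have h := (Matrix.isUnit_iff_isUnit_det _).1 ψ.isUnit
      rw [hψ, aux_det] at h
      exact (isUnit_pow_iff (by omega)).1 h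
    exact ⟨Matrix.GeneralLinearGroup.mk'' A hdet, hψ, hχ⟩
  · rintro ⟨A, hψ, hχ⟩
    rw [hψ, hχ]
    constructor
    · ext i j
      rw [aux_mul_D0, aux_D0_mul n a hN]
      split_ifs with h
      · rfl
      · have h1 : i.val / a < n - 1 := (Nat.div_lt_iff_lt_mul ha).2 i.isLt
        have h2 : n - 1 ≤ j.val / a := (Nat.le_div_iff_mul_le ha).2 (by omega)
        have h3 : ¬ i.val / a = j.val / a := by omega
        simp [blockDiagRep, h3]
    · ext i j
      rw [aux_mul_D1 n a hN, aux_D1_mul n a hN]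
      split_ifs with h
      · obtain ⟨j, hj⟩ := j
        obtain ⟨j', rfl⟩ : ∃ j', j = j' + a := ⟨j - a, by simp at h; omega⟩
        simp [blockDiagRep, Nat.add_div_right _ ha]
      · have h3 : j.val / a = 0 := Nat.div_eq_of_lt (by omega)
        simp [blockDiagRep, Nat.add_div_right _ ha, h3]
end
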